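/- Let p ≥ 1 and m ≥ 1 be integers. Then there exists a polynomial q ∈ ℝ[x] with deg q ≤ m such that sup_{x∈[−1,1]} |f_p(x) − q(x)| ≤ 6·(1 − (1 − 1/m)^p), and in particular sup_{x∈[−1,1]} |f_p(x) − q(x)| ≤ 6·p/m. -/

import Mathlib

/-!
Write `f_p(x) = (-x) ^ (p - 1) * (|x| - x) / 2`, so that an approximation of `|x|` yields one of
`f_p` of degree larger by `p - 1`. With `x = sin θ`, the classical Fourier series
`|sin θ| = 2 / π - 4 / π * ∑ cos (2 (n + 1) θ) / ((2 n + 1) (2 n + 3))` has polynomial partial sums,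
because `cos (2 (n + 1) θ) = T_{n+1} (1 - 2 x²)`, and its coefficients telescope, so the first `K`
terms give degree `2 K` and error at most `2 / (π (2 K + 1))`. If `m ≥ 2 p`, taking `2 K ≈ m - p`
gives error at most `1 / m ≤ 1 - (1 - 1 / m) ^ p`; if `m < 2 p`, then `(1 - 1 / m) ^ p ≤ 2 / 3`, and
the zero polynomial will do.
-/

noncomputable section

/-- The negative part function `f_p`: `f_p(x) = |x|^p` for `x < 0` and `0` otherwise. -/
def negPart (p : ℕ) (x : ℝ) : ℝ := if x < 0 then |x| ^ p else 0

section FourierSeries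

open Complex

theorem hasSum_fourierCoeff_mul_cos_of_even {T : ℝ} [Fact (0 < T)] {f : C(AddCircle T, ℂ)}
    (hf : Summable (fourierCoeff f)) (heven : (fourierCoeff f).Even) (x : ℝ) :
    HasSum (fun n : ℕ ↦ fourierCoeff f (n + 1) * (2 * cos (2 * Real.pi * (n + 1) * x / T)))
      (f x - fourierCoeff f 0) := by
  have hsum := (has_pointwise_sum_fourier_series_of_summable hf x).nat_add_neg
  have hpair (n : ℕ) : fourierCoeff f n • fourier n (x : AddCircle T) +
        fourierCoeff f (-n) • fourier (-n) (x : AddCircle T) =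
      fourierCoeff f n * (2 * cos (2 * Real.pi * n * x / T)) := by
    rw [heven, two_cos, fourier_coe_apply, fourier_coe_apply, smul_eq_mul, smul_eq_mul, ← mul_add]
    push_cast
    ring_nf
  simp only [hpair] at hsum
  convert! (hasSum_nat_add_iff' 1).2 hsum using 1
  · push_cast
    rfl
  · simp only [Finset.sum_range_one, Nat.cast_zero, mul_zero, zero_mul, zero_div, cos_zero,
      smul_eq_mul, fourier_zero]
    ring

theorem one_add_sq_mul_integral_exp_mul_sin (a : ℂ) (b c : ℝ) :
    (1 + a ^ 2) * ∫ x in b..c, exp (a * x) * sin x =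
      exp (a * c) * (a * sin c - cos c) - exp (a * b) * (a * sin b - cos b) := by
  rw [← intervalIntegral.integral_const_mul]
  refine intervalIntegral.integral_eq_sub_of_hasDerivAt
    (f := fun x : ℝ ↦ exp (a * x) * (a * sin x - cos x)) (fun x _ ↦ ?_)
    (Continuous.intervalIntegrable (by fun_prop) _ _)
  have hexp := ((hasDerivAt_id (x : ℂ)).const_mul a).cexp
  have htrig := ((hasDerivAt_sin (x : ℂ)).const_mul a).sub (hasDerivAt_cos (x : ℂ))
  refine (hexp.mul htrig).comp_ofReal.congr_deriv ?_
  simp only [id_eq, Pi.sub_apply]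
  ring

end FourierSeries

section AbsSin

open Real

theorem periodic_abs_sin : Function.Periodic (fun x ↦ |sin x|) π := fun x ↦ by
  simp only [sin_add_pi, abs_neg]

/-- The function `|sin|` on the circle `ℝ / πℤ`, complex valued so that `fourierCoeff` applies. -/
def absSinCircle : C(AddCircle π, ℂ) where
  toFun θ := (periodic_abs_sin.lift θ : ℝ)
  continuous_toFun := Complex.continuous_ofReal.comp
    (continuous_coinduced_dom.mpr continuous_sin.abs)

theorem absSinCircle_coe (x : ℝ) : absSinCircle (x : AddCircle π) = |sin x| := rfl

theorem fourierCoeff_absSinCircle [Fact (0 < π)] (n : ℤ) :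
    fourierCoeff absSinCircle n = (2 / (π * (1 - 4 * n ^ 2)) : ℝ) := by
  have hpi : (π : ℂ) ≠ 0 := Complex.ofReal_ne_zero.2 pi_ne_zero
  have hne : (1 - 4 * n ^ 2 : ℂ) ≠ 0 := by
    exact_mod_cast (by omega : 1 - 4 * n ^ 2 ≠ 0)
  have hexp : Complex.exp (-(2 * Complex.I * n) * π) = 1 :=
    Complex.exp_eq_one_iff.2 ⟨-n, by push_cast; ring⟩
  have hintegrand : ∀ x ∈ Set.uIcc 0 π, fourier (-n) (x : AddCircle π) • absSinCircle x =
      Complex.exp (-(2 * Complex.I * n) * x) * Complex.sin x := fun x hx ↦ by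
    rw [Set.uIcc_of_le pi_pos.le] at hx
    rw [absSinCircle_coe, abs_of_nonneg (sin_nonneg_of_mem_Icc hx), fourier_coe_apply, smul_eq_mul,
      Complex.ofReal_sin]
    congr 2
    push_cast
    field_simp
  have hintegral : ∫ x in (0 : ℝ)..π, Complex.exp (-(2 * Complex.I * n) * x) * Complex.sin x =
      2 / (1 - 4 * n ^ 2) := by
    have h := one_add_sq_mul_integral_exp_mul_sin (-(2 * Complex.I * n)) 0 π
    rw [hexp, neg_sq, mul_pow, mul_pow, Complex.I_sq] at h
    simp only [Complex.ofReal_zero, mul_zero, Complex.exp_zero, Complex.sin_zero,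
      Complex.cos_zero, ← Complex.ofReal_sin, ← Complex.ofReal_cos, sin_pi, cos_pi] at h
    push_cast at h
    rw [eq_div_iff hne]
    linear_combination h
  rw [fourierCoeff_eq_intervalIntegral _ n 0, zero_add,
    intervalIntegral.integral_congr hintegrand, hintegral, Complex.real_smul]
  push_cast
  field_simp

theorem summable_fourierCoeff_absSinCircle [Fact (0 < π)] :
    Summable (fourierCoeff absSinCircle) := by
  simp_rw [funext fourierCoeff_absSinCircle, Complex.summable_ofReal]
  refine (summable_one_div_int_pow.2 one_lt_two).of_norm_bounded_eventually ?_
  filter_upwards [Filter.eventually_cofinite_ne (0 : ℤ)] with n hn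
  have hn_sq : (1 : ℝ) ≤ n ^ 2 := by
    exact_mod_cast Int.add_one_le_of_lt (by positivity : 0 < n ^ 2)
  rw [norm_div, norm_mul, norm_ofNat, norm_of_nonneg pi_pos.le, norm_eq_abs,
    abs_of_neg (by linarith), div_le_div_iff₀ (mul_pos pi_pos (by linarith)) (by linarith)]
  nlinarith [pi_gt_three]

theorem hasSum_cos_div_eq_abs_sin (x : ℝ) :
    HasSum (fun n : ℕ ↦ cos (2 * (n + 1) * x) / ((2 * n + 1) * (2 * n + 3)))
      (1 / 2 - π / 4 * |sin x|) := by
  have : Fact (0 < π) := ⟨pi_pos⟩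
  have heven : (fourierCoeff absSinCircle).Even := fun n ↦ by
    simp only [fourierCoeff_absSinCircle, Int.cast_neg, neg_sq]
  have hsum := (hasSum_fourierCoeff_mul_cos_of_even summable_fourierCoeff_absSinCircle heven
    x).mul_left (-π / 4 : ℂ)
  rw [← Complex.hasSum_ofReal]
  have hpi : (π : ℂ) ≠ 0 := Complex.ofReal_ne_zero.2 pi_ne_zero
  convert! hsum using 1
  · ext n
    have hfactor : (1 - 4 * (n + 1) ^ 2 : ℂ) = -((2 * n + 1) * (2 * n + 3)) := by ring
    have harg : (2 * π * (n + 1) * x / π : ℂ) = 2 * (n + 1) * x := by field_simp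
    rw [fourierCoeff_absSinCircle, harg]
    push_cast
    rw [hfactor]
    field_simp
    ring
  · rw [absSinCircle_coe, fourierCoeff_absSinCircle]
    push_cast
    field_simp
    ring

end AbsSin

section AbsApproximation

open Filter Polynomial Real

theorem norm_sub_sum_range_le_of_telescoping {E : Type*} [SeminormedAddCommGroup E] {f : ℕ → E}
    {s : E} {g : ℕ → ℝ} (hf : HasSum f s) (hfg : ∀ n, ‖f n‖ ≤ g n - g (n + 1))
    (hg : ∀ n, 0 ≤ g n) (K : ℕ) : ‖s - ∑ n ∈ Finset.range K, f n‖ ≤ g K := by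
  refine le_of_tendsto (hf.tendsto_sum_nat.sub_const _).norm ?_
  filter_upwards [eventually_ge_atTop K] with N hKN
  calc ‖∑ n ∈ Finset.range N, f n - ∑ n ∈ Finset.range K, f n‖
      = ‖∑ n ∈ Finset.Ico K N, f n‖ := by rw [Finset.sum_Ico_eq_sub _ hKN]
    _ ≤ ∑ n ∈ Finset.Ico K N, (g n - g (n + 1)) := norm_sum_le_of_le _ fun n _ ↦ hfg n
    _ = g K - g N := by
      simpa only [neg_sub_neg, neg_sub] using Finset.sum_Ico_sub (fun n ↦ -g n) hKN
    _ ≤ g K := sub_le_self _ (hg N)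

theorem abs_abs_sin_sub_sum_cos_le (K : ℕ) (x : ℝ) :
    |(|sin x|) - (2 / π - 4 / π * ∑ n ∈ Finset.range K,
      cos (2 * (n + 1) * x) / ((2 * n + 1) * (2 * n + 3)))| ≤ 2 / (π * (2 * K + 1)) := by
  have hterm (n : ℕ) : ‖cos (2 * (n + 1) * x) / ((2 * n + 1) * (2 * n + 3))‖ ≤
      1 / (2 * (2 * n + 1)) - 1 / (2 * (2 * (n + 1 : ℕ) + 1)) := by
    calc ‖cos (2 * (n + 1) * x) / ((2 * n + 1) * (2 * n + 3))‖
        ≤ 1 / ((2 * n + 1) * (2 * n + 3)) := by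
          rw [norm_div, norm_eq_abs, norm_of_nonneg (by positivity)]
          gcongr
          exact abs_cos_le_one _
      _ = 1 / (2 * (2 * n + 1)) - 1 / (2 * (2 * (n + 1 : ℕ) + 1)) := by
          push_cast
          field_simp
          ring
  have htail := norm_sub_sum_range_le_of_telescoping (hasSum_cos_div_eq_abs_sin x) hterm
    (fun n ↦ by positivity) K
  rw [norm_eq_abs] at htail
  set S := ∑ n ∈ Finset.range K, cos (2 * (n + 1) * x) / ((2 * n + 1) * (2 * n + 3))
  calc |(|sin x|) - (2 / π - 4 / π * S)|
      = 4 / π * |1 / 2 - π / 4 * |sin x| - S| := by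
        rw [← abs_of_pos (by positivity : 0 < 4 / π), ← abs_mul, ← abs_neg,
          abs_of_pos (by positivity : 0 < 4 / π)]
        congr 1
        field_simp
        ring
    _ ≤ 4 / π * (1 / (2 * (2 * K + 1))) := by gcongr
    _ = 2 / (π * (2 * K + 1)) := by
        field_simp
        ring

/-- The polynomial of degree at most `2 * K` approximating `|x|` on `[-1, 1]`: the `K`-th partial
sum of the Fourier series of `|sin θ|`, written in the variable `x = sin θ`. -/
def absApprox (K : ℕ) : ℝ[X] :=
  C (2 / π) - C (4 / π) * ∑ n ∈ Finset.range K,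
    C (1 / ((2 * n + 1) * (2 * n + 3)) : ℝ) * (Chebyshev.T ℝ (n + 1)).comp (1 - 2 * X ^ 2)

theorem natDegree_absApprox_le (K : ℕ) : (absApprox K).natDegree ≤ 2 * K := by
  have hquad : (1 - 2 * X ^ 2 : ℝ[X]).natDegree ≤ 2 := by compute_degree
  have hterm : ∀ n ∈ Finset.range K, (C (1 / ((2 * n + 1) * (2 * n + 3)) : ℝ) *
      (Chebyshev.T ℝ (n + 1)).comp (1 - 2 * X ^ 2)).natDegree ≤ 2 * K := fun n hn ↦ by
    have hT : (Chebyshev.T ℝ (n + 1)).natDegree ≤ K := by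
      rw [Chebyshev.natDegree_T]
      have := Finset.mem_range.1 hn
      omega
    rw [mul_comm 2 K]
    exact (natDegree_C_mul_le _ _).trans (natDegree_comp_le.trans (Nat.mul_le_mul hT hquad))
  rw [absApprox, sub_eq_neg_add, natDegree_add_C, natDegree_neg]
  exact (natDegree_C_mul_le _ _).trans (natDegree_sum_le_of_forall_le _ _ hterm)

theorem eval_sin_absApprox (K : ℕ) (θ : ℝ) :
    (absApprox K).eval (sin θ) = 2 / π - 4 / π * ∑ n ∈ Finset.range K,
      cos (2 * (n + 1) * θ) / ((2 * n + 1) * (2 * n + 3)) := by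
  have hcos (n : ℕ) : (Chebyshev.T ℝ (n + 1)).eval (1 - 2 * sin θ ^ 2) =
      cos (2 * (n + 1) * θ) := by
    rw [← cos_two_mul_eq_one_sub, Chebyshev.T_real_cos]
    push_cast
    ring_nf
  simp only [absApprox, eval_sub, eval_mul, eval_C,
    eval_finsetSum, eval_comp, eval_one, eval_pow,
    eval_X, eval_ofNat, hcos, one_div_mul_eq_div]

theorem abs_abs_sub_eval_absApprox_le (K : ℕ) {x : ℝ} (hx : x ∈ Set.Icc (-1 : ℝ) 1) :
    |(|x|) - (absApprox K).eval x| ≤ 2 / (π * (2 * K + 1)) := by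
  rw [← sin_arcsin hx.1 hx.2, eval_sin_absApprox]
  exact abs_abs_sin_sub_sum_cos_le K (arcsin x)

end AbsApproximation

section NegPartApproximation

open Polynomial Real

theorem negPart_succ_eq_pow_mul (p : ℕ) (x : ℝ) :
    negPart (p + 1) x = (-x) ^ p * ((|x| - x) / 2) := by
  unfold _root_.negPart
  split_ifs with hx
  · rw [abs_of_neg hx]
    ring
  · rw [abs_of_nonneg (not_lt.1 hx), sub_self, zero_div, mul_zero]

theorem abs_negPart_le_one (p : ℕ) {x : ℝ} (hx : x ∈ Set.Icc (-1 : ℝ) 1) :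
    |negPart p x| ≤ 1 := by
  unfold _root_.negPart
  split_ifs
  · rw [abs_pow, abs_abs]
    exact pow_le_one₀ (abs_nonneg _) (abs_le.2 hx)
  · simp only [abs_zero, zero_le_one]

/-- The polynomial approximating `f_{p+1}` on `[-1, 1]`: the function `|x|` in
`f_{p+1}(x) = (-x) ^ p * (|x| - x) / 2` is replaced by `absApprox K`. -/
def negPartApprox (p K : ℕ) : ℝ[X] :=
  (-X) ^ p * (C (1 / 2) * (absApprox K - X))

theorem natDegree_negPartApprox_le (p : ℕ) {K : ℕ} (hK : 1 ≤ K) :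
    (negPartApprox p K).natDegree ≤ p + 2 * K := by
  have hpow : ((-X : ℝ[X]) ^ p).natDegree ≤ p := by compute_degree
  have hsub : (absApprox K - X).natDegree ≤ 2 * K :=
    natDegree_sub_le_of_le (natDegree_absApprox_le K)
      (natDegree_X_le.trans (by omega)) |>.trans (max_self _).le
  exact natDegree_mul_le_of_le hpow
    ((natDegree_C_mul_le _ _).trans hsub)

theorem abs_negPart_sub_eval_negPartApprox_le (p K : ℕ) {x : ℝ} (hx : x ∈ Set.Icc (-1 : ℝ) 1) :
    |negPart (p + 1) x - (negPartApprox p K).eval x| ≤ 1 / (π * (2 * K + 1)) := by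
  have hpow : |(-x) ^ p| ≤ 1 := by
    rw [abs_pow, abs_neg]
    exact pow_le_one₀ (abs_nonneg _) (abs_le.2 hx)
  have herror : negPart (p + 1) x - (negPartApprox p K).eval x =
      (-x) ^ p * ((|x| - (absApprox K).eval x) / 2) := by
    rw [negPart_succ_eq_pow_mul]
    simp only [negPartApprox, eval_mul, eval_pow, eval_neg,
      eval_X, eval_C, eval_sub]
    ring
  calc |negPart (p + 1) x - (negPartApprox p K).eval x|
      = |(-x) ^ p| * (|(|x|) - (absApprox K).eval x| / 2) := by
        rw [herror, abs_mul, abs_div, abs_two]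
    _ ≤ 1 * (2 / (π * (2 * K + 1)) / 2) := by
        gcongr
        exact abs_abs_sub_eval_absApprox_le K hx
    _ = 1 / (π * (2 * K + 1)) := by ring

end NegPartApproximation

section OneSubPow

variable {R : Type*} [CommRing R] [LinearOrder R] [IsStrictOrderedRing R] {a : R}

theorem one_sub_pow_mul_one_add_mul_le_one (h0 : 0 ≤ a) (h1 : a ≤ 1) (n : ℕ) :
    (1 - a) ^ n * (1 + n * a) ≤ 1 := by
  calc (1 - a) ^ n * (1 + n * a)
      ≤ (1 - a) ^ n * (1 + a) ^ n :=
        mul_le_mul_of_nonneg_left (one_add_mul_le_pow (by linarith) n)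
          (pow_nonneg (sub_nonneg.2 h1) n)
    _ = (1 - a ^ 2) ^ n := by rw [← mul_pow]; ring
    _ ≤ 1 := pow_le_one₀ (sub_nonneg.2 (pow_le_one₀ h0 h1)) (sub_le_self _ (sq_nonneg a))

theorem one_sub_one_sub_pow_le_mul (h2 : a ≤ 2) (n : ℕ) : 1 - (1 - a) ^ n ≤ n * a := by
  have := one_add_mul_le_pow (a := -a) (by linarith) n
  rw [← sub_eq_add_neg] at this
  linarith

end OneSubPow

theorem exists_natDegree_le_abs_negPart_sub_eval_le {p m : ℕ} (hp : 1 ≤ p) (hm : 1 ≤ m) :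
    ∃ q : Polynomial ℝ, q.natDegree ≤ m ∧ ∀ x ∈ Set.Icc (-1 : ℝ) 1,
      |negPart p x - q.eval x| ≤ 6 * (1 - (1 - 1 / (m : ℝ)) ^ p) := by
  have hm' : (1 : ℝ) ≤ m := by exact_mod_cast hm
  have h0 : 0 ≤ 1 / (m : ℝ) := by positivity
  have h1 : 1 / (m : ℝ) ≤ 1 := by rwa [div_le_one (by linarith)]
  rcases lt_or_ge m (2 * p) with hmp | hpm
  · refine ⟨0, by simp, fun x hx ↦ ?_⟩
    have hhalf : 1 / 2 ≤ p * (1 / (m : ℝ)) := by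
      rw [mul_one_div, div_le_div_iff₀ two_pos (by linarith)]
      exact_mod_cast (by omega : 1 * m ≤ p * 2)
    have hpow : (1 - 1 / (m : ℝ)) ^ p ≤ 2 / 3 := by
      nlinarith [one_sub_pow_mul_one_add_mul_le_one h0 h1 p, pow_nonneg (sub_nonneg.2 h1) p]
    rw [Polynomial.eval_zero, sub_zero]
    linarith [abs_negPart_le_one p hx]
  · obtain ⟨p, rfl⟩ := Nat.exists_eq_add_of_le' hp
    obtain ⟨K, hK, hdeg, hmK⟩ : ∃ K, 1 ≤ K ∧ p + 2 * K ≤ m ∧ m ≤ 2 * (2 * K + 1) :=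
      ⟨(m - p) / 2, by omega, by omega, by omega⟩
    refine ⟨negPartApprox p K, (natDegree_negPartApprox_le p hK).trans hdeg, fun x hx ↦ ?_⟩
    have herror : 1 / (Real.pi * (2 * K + 1)) ≤ 1 / (m : ℝ) := by
      have hmK' : (m : ℝ) ≤ 2 * (2 * K + 1) := by exact_mod_cast hmK
      gcongr
      nlinarith [Real.pi_gt_three]
    have hpow : (1 - 1 / (m : ℝ)) ^ (p + 1) ≤ 1 - 1 / m :=
      pow_le_of_le_one (sub_nonneg.2 h1) (sub_le_self _ h0) p.succ_ne_zero
    linarith [abs_negPart_sub_eval_negPartApprox_le p K hx]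

/-- there is a polynomial of degree at most `m` approximating `f_p`
uniformly on `[-1,1]` within `6·(1-(1-1/m)^p)`, and in particular within `6·p/m`. -/
theorem statement15 (p m : ℕ) (hp : 1 ≤ p) (hm : 1 ≤ m) :
    ∃ q : Polynomial ℝ, q.natDegree ≤ m ∧
      (∀ x ∈ Set.Icc (-1 : ℝ) 1,
        |negPart p x - q.eval x| ≤ 6 * (1 - (1 - 1 / (m : ℝ)) ^ p)) ∧
      (∀ x ∈ Set.Icc (-1 : ℝ) 1,
        |negPart p x - q.eval x| ≤ 6 * (p : ℝ) / m) := by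
  obtain ⟨q, hdeg, hbound⟩ := exists_natDegree_le_abs_negPart_sub_eval_le hp hm
  refine ⟨q, hdeg, hbound, fun x hx ↦ (hbound x hx).trans ?_⟩
  have hinv : 1 / (m : ℝ) ≤ 1 := div_le_one_of_le₀ (by exact_mod_cast hm) m.cast_nonneg
  calc 6 * (1 - (1 - 1 / (m : ℝ)) ^ p)
      ≤ 6 * (p * (1 / m)) := by
        gcongr
        exact one_sub_one_sub_pow_le_mul (hinv.trans one_le_two) p
    _ = 6 * (p : ℝ) / m := by ring

end
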